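/- The projection p : ℝ³ \ {0} → S² × ℝ/ℤ, p(x) = (x/‖x‖, log₂‖x‖ mod 1), is a covering map. -/

import Mathlib

/-- Punctured three-dimensional Euclidean space `ℝ³ \ {0}`. -/
def PuncturedR3 : Type := {y : EuclideanSpace ℝ (Fin 3) // y ≠ 0}

noncomputable instance : TopologicalSpace PuncturedR3 := instTopologicalSpaceSubtype

/-- The contraction `a(x) = x/2` on `ℝ³ \ {0}`. -/
noncomputable def contractionA (x : PuncturedR3) : PuncturedR3 :=
  ⟨(2 : ℝ)⁻¹ • x.1, smul_ne_zero (by norm_num) x.2⟩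

/-- The projection `p : ℝ³ \ {0} → S² × ℝ/ℤ`,
`p(x) = (x/‖x‖, log₂ ‖x‖ mod 1)`. -/
noncomputable def projP (x : PuncturedR3) :
    Metric.sphere (0 : EuclideanSpace ℝ (Fin 3)) 1 × AddCircle (1 : ℝ) :=
  (⟨‖x.1‖⁻¹ • x.1, by
      have h : ‖x.1‖ ≠ 0 := norm_ne_zero_iff.mpr x.2
      simp [mem_sphere_zero_iff_norm, norm_smul, inv_mul_cancel₀ h]⟩,
    (Real.logb 2 ‖x.1‖ : ℝ))

/-!
In polar coordinates with logarithmic radius `t = log₂ ‖x‖`, the punctured space becomes `S² × ℝ`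
and `p` becomes the product of the identity of `S²` with the universal covering `ℝ → ℝ/ℤ`; a
product of covering maps is a covering map.
-/

section Covering

variable {E E' X X' I J : Type*} [TopologicalSpace E] [TopologicalSpace E'] [TopologicalSpace X]
  [TopologicalSpace X'] [TopologicalSpace I] [TopologicalSpace J]

theorem isEvenlyCovered_prodMap {f : E → X} {g : E' → X'} {x : X} {x' : X'}
    (hf : IsEvenlyCovered f x I) (hg : IsEvenlyCovered g x' J) :
    IsEvenlyCovered (Prod.map f g) (x, x') (I × J) := by
  obtain ⟨_, U, hxU, hU, hfU, H, hH⟩ := hf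
  obtain ⟨_, V, hxV, hV, hgV, K, hK⟩ := hg
  let e : Prod.map f g ⁻¹' (U ×ˢ V) ≃ₜ (U ×ˢ V : Set (X × X')) × (I × J) :=
    (Homeomorph.Set.prod (f ⁻¹' U) (g ⁻¹' V)).trans <|
      (H.prodCongr K).trans <|
        (Homeomorph.prodProdProdComm U I V J).trans <|
          (Homeomorph.Set.prod U V).symm.prodCongr (Homeomorph.refl (I × J))
  exact ⟨inferInstance, U ×ˢ V, ⟨hxU, hxV⟩, hU.prod hV, hfU.prod hgV, e,
    fun y => Prod.ext (hH ⟨y.1.1, y.2.1⟩) (hK ⟨y.1.2, y.2.2⟩)⟩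

theorem isCoveringMap_prodMap {f : E → X} {g : E' → X'} (hf : IsCoveringMap f)
    (hg : IsCoveringMap g) : IsCoveringMap (Prod.map f g) :=
  fun x => (isEvenlyCovered_prodMap (hf x.1) (hg x.2)).to_isEvenlyCovered_preimage

theorem isCoveringMap_id : IsCoveringMap (id : X → X) := fun x =>
  IsEvenlyCovered.to_isEvenlyCovered_preimage (I := Unit)
    ⟨inferInstance, Set.univ, Set.mem_univ x, isOpen_univ, isOpen_univ,
      (Homeomorph.prodPUnit (Set.univ : Set X)).symm, fun _ => rfl⟩

end Covering

/-- The logarithm to base `b`, as a homeomorphism from the positive reals onto `ℝ`. -/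
noncomputable def logbHomeomorph {b : ℝ} (hb : 0 < b) (hb₁ : b ≠ 1) : Set.Ioi (0 : ℝ) ≃ₜ ℝ where
  toFun r := Real.logb b r
  invFun t := ⟨b ^ t, Real.rpow_pos_of_pos hb t⟩
  left_inv r := Subtype.ext (Real.rpow_logb hb hb₁ r.2)
  right_inv _ := Real.logb_rpow hb hb₁
  continuous_toFun := Real.continuous_logb'
  continuous_invFun := (Real.continuous_const_rpow hb.ne').subtype_mk _

section LogPolar

variable (E : Type*) [NormedAddCommGroup E] [NormedSpace ℝ E]

/-- Polar coordinates on a punctured normed space, with the radius recorded by its logarithm to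
base `b`. -/
noncomputable def logPolarHomeomorph {b : ℝ} (hb : 0 < b) (hb₁ : b ≠ 1) :
    ({0}ᶜ : Set E) ≃ₜ Metric.sphere (0 : E) 1 × ℝ :=
  (homeomorphUnitSphereProd E).trans ((Homeomorph.refl _).prodCongr (logbHomeomorph hb hb₁))

/-- The map `x ↦ (x / ‖x‖, log_b ‖x‖ mod p)` on a punctured normed space; `projP` is the case
`E = ℝ³`, `b = 2`, `p = 1`. -/
noncomputable def logPolarProj (b p : ℝ) (x : ({0}ᶜ : Set E)) :
    Metric.sphere (0 : E) 1 × AddCircle p :=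
  (⟨‖x.1‖⁻¹ • x.1, mem_sphere_zero_iff_norm.mpr (norm_smul_inv_norm (𝕜 := ℝ) x.2)⟩,
    (Real.logb b ‖x.1‖ : ℝ))

theorem prodMap_coe_comp_logPolarHomeomorph {b : ℝ} (hb : 0 < b) (hb₁ : b ≠ 1) (p : ℝ) :
    Prod.map id ((↑) : ℝ → AddCircle p) ∘ logPolarHomeomorph E hb hb₁ = logPolarProj E b p := by
  funext x
  refine Prod.ext (Subtype.ext ?_) ?_
  · exact homeomorphUnitSphereProd_apply_fst_coe E x
  · exact congrArg (fun r : ℝ => (Real.logb b r : AddCircle p))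
      (homeomorphUnitSphereProd_apply_snd_coe E x)

theorem projP_isCoveringMap_general {b : ℝ} (hb : 0 < b) (hb₁ : b ≠ 1) (p : ℝ) :
    IsCoveringMap (logPolarProj E b p) := by
  rw [← prodMap_coe_comp_logPolarHomeomorph E hb hb₁ p]
  exact (isCoveringMap_prodMap isCoveringMap_id (AddCircle.isCoveringMap_coe p)).comp_homeomorph _

end LogPolar

/-- The projection `p : ℝ³ \ {0} → S² × ℝ/ℤ` is a covering map. -/
theorem projP_isCoveringMap : IsCoveringMap projP :=
  projP_isCoveringMap_general (EuclideanSpace ℝ (Fin 3)) two_pos (by norm_num) 1
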